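/- Let β ∈ (0,1) and let f be the 2π-periodic extension of u ↦ |u|^β from [−π,π). Then there exist constants C > 0 and δ ∈ (0,π) such that for all u with 0 < |u| < δ, |(K_∞ f)(u) + β tan(πβ/2) · |u|^{β−1}| ≤ C; that is, (K_∞ f)(u) = −β tan(πβ/2) |u|^{β−1} + O(1) as u → 0. -/

import Mathlib

open Real MeasureTheory Filter Set Asymptotics

/-- Principal value (at `u`) of the integral of `g` over `(-π, π)`. -/
noncomputable def pvInt (g : ℝ → ℝ) (u : ℝ) : ℝ :=
  limUnder (nhdsWithin (0:ℝ) (Set.Ioi 0))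
    (fun ε : ℝ => ∫ x in {x : ℝ | x ∈ Set.Ioo (-π) π ∧ ε < |x - u|}, g x)

/-- Periodic Hilbert transform of a `2π`-periodic function:
`ℋ(f)(u) = (1/π) Σ_{n ∈ ℤ} p.v.∫_{-π}^{π} f(x)/(x - u + 2πn) dx`. -/
noncomputable def periodicHilbert (f : ℝ → ℝ) (u : ℝ) : ℝ :=
  (1/π) * ∑' n : ℤ, pvInt (fun x => f x / (x - u + 2*π*(n : ℝ))) u

/-- The operator `K_∞ = -ℋ ∂ᵤ` acting via the a.e. derivative. -/
noncomputable def Kinf (f : ℝ → ℝ) (u : ℝ) : ℝ := - periodicHilbert (deriv f) u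

/-- The `2π`-periodic extension of `g : [-π, π) → ℝ`. -/
noncomputable def perExt (g : ℝ → ℝ) (x : ℝ) : ℝ :=
  g (x - 2*π*(⌊(x + π)/(2*π)⌋ : ℝ))

lemma hs_conv {f g : ℕ → ℝ} {a b : ℝ} (h : HasSum f a) (hf : ∀ k, g k = f k) (ha : b = a) :
    HasSum g b := by
  have : g = f := funext hf
  rw [this, ha]
  exact h

lemma aux_cot_hasSum (z : ℝ) (hz : z ∈ Set.Ioo (0:ℝ) 1) :
    HasSum (fun n : ℕ => 1 / (z - (n + 1)) + 1 / (z + (n + 1))) (π * Real.cot (π * z) - 1 / z) := by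
  have hc : (z : ℂ) ∈ Complex.integerComplement := by
    rw [Complex.mem_integerComplement_iff]
    rintro ⟨n, hn⟩
    have hn' : (n : ℝ) = z := by exact_mod_cast hn
    have h1 : (0:ℝ) < n := by rw [hn']; exact hz.1
    have h2 : (n:ℝ) < 1 := by rw [hn']; exact hz.2
    have h3 : 0 < n := by exact_mod_cast h1
    have h4 : n < 1 := by exact_mod_cast h2
    omega
  have h := (summable_cotTerm hc).hasSum
  have h' := cot_series_rep' hc
  rw [← h'] at h
  rw [← Complex.hasSum_ofReal]
  convert h using 1
  · ext n
    simp [cotTerm]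
  · push_cast
    rfl

lemma aux_tan_hasSum (β : ℝ) (hβ : β ∈ Set.Ioo (0:ℝ) 1) :
    HasSum (fun k : ℕ => 1 / (2 * (k:ℝ) + 1 - β) - 1 / (2 * (k:ℝ) + 1 + β))
      (π / 2 * Real.tan (π * β / 2)) := by
  have h1 := aux_cot_hasSum β hβ
  have h2 := aux_cot_hasSum (β / 2) ⟨by linarith [hβ.1], by linarith [hβ.2]⟩
  have he : Summable (fun k : ℕ => 1 / (β - (((2 * k : ℕ):ℝ) + 1)) + 1 / (β + (((2 * k : ℕ):ℝ) + 1))) :=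
    h1.summable.comp_injective (i := fun k : ℕ => 2 * k) (fun a b h => by simpa using h)
  have ho : HasSum (fun k : ℕ => 1 / (β - (((2 * k + 1 : ℕ):ℝ) + 1)) + 1 / (β + (((2 * k + 1: ℕ):ℝ) + 1)))
      (1 / 2 * (π * Real.cot (π * (β / 2)) - 1 / (β / 2))) := by
    refine hs_conv (h2.mul_left (1/2)) (fun k => ?_) rfl
    have e1 : β - (((2 * k + 1 : ℕ):ℝ) + 1) = 2 * (β / 2 - (k + 1)) := by push_cast; ring
    have e2 : β + (((2 * k + 1 : ℕ):ℝ) + 1) = 2 * (β / 2 + (k + 1)) := by push_cast; ring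
    rw [e1, e2, one_div_mul_eq_div, one_div, one_div, mul_inv, mul_inv]
    ring
  have hs := (he.hasSum.even_add_odd (f := fun n : ℕ => 1 / (β - ((n:ℝ) + 1)) + 1 / (β + ((n:ℝ) + 1))) ho).unique h1
  have hX := he.hasSum.neg
  refine hs_conv hX (fun k => ?_) ?_
  · have : β - (((2 * k : ℕ):ℝ) + 1) = - (2 * (k:ℝ) + 1 - β) := by push_cast; ring
    rw [this, one_div_neg_eq_neg_one_div]
    push_cast
    rw [add_comm β]
    ring
  · have hx : π * β = 2 * (π * (β / 2)) := by ring
    have hx' : π * β / 2 = π * (β / 2) := by ring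
    rw [hx, Real.cot_eq_cos_div_sin, Real.cot_eq_cos_div_sin, Real.cos_two_mul', Real.sin_two_mul] at hs
    rw [hx', Real.tan_eq_sin_div_cos]
    have hp := Real.pi_pos
    have hb1 := hβ.1
    have hb2 := hβ.2
    have hs0 : 0 < Real.sin (π * (β / 2)) := Real.sin_pos_of_pos_of_lt_pi (by positivity) (by nlinarith)
    have hc0 : 0 < Real.cos (π * (β / 2)) := Real.cos_pos_of_mem_Ioo ⟨by nlinarith, by nlinarith⟩
    have e : π * ((Real.cos (π * (β / 2)) ^ 2 - Real.sin (π * (β / 2)) ^ 2) /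
        (2 * Real.sin (π * (β / 2)) * Real.cos (π * (β / 2)))) =
        π / 2 * (Real.cos (π * (β / 2)) / Real.sin (π * (β / 2))) - π / 2 * (Real.sin (π * (β / 2)) / Real.cos (π * (β / 2))) := by
      field_simp
    rw [e] at hs
    have e3 : 1 / (β / 2) = 2 * (1 / β) := by field_simp
    rw [e3] at hs
    linarith

/-- The kernel after folding. -/
noncomputable def phiK (β y : ℝ) : ℝ := (y ^ β - 1) / (y ^ 2 - 1)

lemma phiK_hasSum_left (β : ℝ) (hβ : β ∈ Set.Ioo (0:ℝ) 1) :
    HasSum (fun k : ℕ => 1 / (2 * (k:ℝ) + 1) - 1 / (2 * (k:ℝ) + 1 + β))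
      (∫ y in Ioo (0:ℝ) 1, phiK β y) := by
  have hb1 := hβ.1
  have hb2 := hβ.2
  let F : ℕ → ℝ → ℝ := fun k y => y ^ ((2 * k : ℕ):ℝ) - y ^ ((2 * k : ℕ) + β)
  have hi1 : ∀ r : ℝ, 0 ≤ r → IntegrableOn (fun y : ℝ => y ^ r) (Ioo (0:ℝ) 1) := fun r hr => by
    have := intervalIntegral.intervalIntegrable_rpow' (a := 0) (b := 1) (r := r) (by linarith)
    rw [intervalIntegrable_iff_integrableOn_Ioo_of_le (by norm_num)] at this
    exact this
  have hv1 : ∀ r : ℝ, 0 ≤ r → ∫ y in Ioo (0:ℝ) 1, y ^ r = 1 / (r + 1) := fun r hr => by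
    rw [← integral_Ioc_eq_integral_Ioo, ← intervalIntegral.integral_of_le (by norm_num),
      integral_rpow (Or.inl (by linarith)), Real.one_rpow, Real.zero_rpow (by linarith)]
    simp
  have hi : ∀ k, IntegrableOn (F k) (Ioo (0:ℝ) 1) := fun k =>
    (hi1 _ (by positivity)).sub (hi1 _ (by positivity))
  have hv : ∀ k : ℕ, ∫ y in Ioo (0:ℝ) 1, F k y = 1 / (2 * (k:ℝ) + 1) - 1 / (2 * (k:ℝ) + 1 + β) := by
    intro k
    simp only [F]
    rw [integral_sub (hi1 _ (by positivity)) (hi1 _ (by positivity)), hv1 _ (by positivity), hv1 _ (by positivity)]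
    push_cast
    congr 2; ring
  have hn : ∀ k : ℕ, ∫ y in Ioo (0:ℝ) 1, ‖F k y‖ = 1 / (2 * (k:ℝ) + 1) - 1 / (2 * (k:ℝ) + 1 + β) := by
    intro k
    rw [← hv]
    refine setIntegral_congr_fun measurableSet_Ioo fun y hy => ?_
    simp only [F]
    rw [Real.norm_of_nonneg]
    rw [sub_nonneg]
    exact Real.rpow_le_rpow_of_exponent_ge hy.1 hy.2.le (by linarith)
  have hsum : Summable (fun k : ℕ => 1 / (2 * (k:ℝ) + 1) - 1 / (2 * (k:ℝ) + 1 + β)) := by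
    refine Summable.of_nonneg_of_le (fun k => ?_) (fun k => ?_) (aux_tan_hasSum β hβ).summable
    · rw [sub_nonneg]
      exact one_div_le_one_div_of_le (by positivity) (by linarith)
    · have : 0 ≤ (k:ℝ) := by positivity
      have := one_div_le_one_div_of_le (a := 2 * (k:ℝ) + 1 - β) (b := 2 * (k:ℝ) + 1) (by linarith) (by linarith)
      linarith
  have H := hasSum_integral_of_summable_integral_norm (μ := volume.restrict (Ioo (0:ℝ) 1)) (F := F) hi
    (by simp only [hn]; exact hsum)
  simp only [hv] at H
  refine hs_conv H (fun _ => rfl) ?_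
  refine setIntegral_congr_fun measurableSet_Ioo fun y hy => ?_
  have hy1 := hy.1
  have hy2 := hy.2
  have hyq : y ^ 2 < 1 := by nlinarith
  have hg := (hasSum_geometric_of_lt_one (sq_nonneg y) hyq).mul_left (1 - y ^ β)
  have : (fun i => F i y) = fun i : ℕ => (1 - y ^ β) * (y ^ 2) ^ i := by
    ext i
    simp only [F]
    rw [Real.rpow_add hy1, Real.rpow_natCast, pow_mul]
    ring
  show phiK β y = ∑' i, F i y
  rw [this, hg.tsum_eq, phiK, ← div_eq_mul_inv, ← neg_div_neg_eq]
  ring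

lemma phiK_hasSum_right (β : ℝ) (hβ : β ∈ Set.Ioo (0:ℝ) 1) :
    HasSum (fun k : ℕ => 1 / (2 * (k:ℝ) + 1 - β) - 1 / (2 * (k:ℝ) + 1))
      (∫ y in Ioi (1:ℝ), phiK β y) := by
  have hb1 := hβ.1
  have hb2 := hβ.2
  let F : ℕ → ℝ → ℝ := fun k y => y ^ (-((2 * k + 2 : ℕ):ℝ) + β) - y ^ (-((2 * k + 2: ℕ):ℝ))
  have hi1 : ∀ r : ℝ, r < -1 → IntegrableOn (fun y : ℝ => y ^ r) (Ioi (1:ℝ)) := fun r hr =>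
    integrableOn_Ioi_rpow_of_lt hr one_pos
  have hv1 : ∀ r : ℝ, r < -1 → ∫ y in Ioi (1:ℝ), y ^ r = 1 / (-r - 1) := fun r hr => by
    rw [integral_Ioi_rpow_of_lt hr one_pos, Real.one_rpow, ← neg_div_neg_eq]
    congr 1 <;> ring
  have hA : ∀ k : ℕ, -((2 * k + 2 : ℕ):ℝ) + β < -1 := fun k => by
    push_cast
    have : 0 ≤ (k:ℝ) := by positivity
    linarith
  have hB : ∀ k : ℕ, -((2 * k + 2 : ℕ):ℝ) < -1 := fun k => by
    have := hA k
    linarith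
  have hi : ∀ k, IntegrableOn (F k) (Ioi (1:ℝ)) := fun k =>
    (hi1 _ (hA k)).sub (hi1 _ (hB k))
  have hv : ∀ k : ℕ, ∫ y in Ioi (1:ℝ), F k y = 1 / (2 * (k:ℝ) + 1 - β) - 1 / (2 * (k:ℝ) + 1) := by
    intro k
    simp only [F]
    rw [integral_sub (hi1 _ (hA k)) (hi1 _ (hB k)), hv1 _ (hA k), hv1 _ (hB k)]
    push_cast
    congr 2 <;> ring
  have hn : ∀ k : ℕ, ∫ y in Ioi (1:ℝ), ‖F k y‖ = 1 / (2 * (k:ℝ) + 1 - β) - 1 / (2 * (k:ℝ) + 1) := by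
    intro k
    rw [← hv]
    refine setIntegral_congr_fun measurableSet_Ioi fun y hy => ?_
    simp only [F]
    rw [Real.norm_of_nonneg]
    rw [sub_nonneg]
    exact Real.rpow_le_rpow_of_exponent_le (le_of_lt hy) (by linarith)
  have hsum : Summable (fun k : ℕ => 1 / (2 * (k:ℝ) + 1 - β) - 1 / (2 * (k:ℝ) + 1)) := by
    refine Summable.of_nonneg_of_le (fun k => ?_) (fun k => ?_) (aux_tan_hasSum β hβ).summable
    · rw [sub_nonneg]
      have : 0 ≤ (k:ℝ) := by positivity
      exact one_div_le_one_div_of_le (by linarith) (by linarith)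
    · have := one_div_le_one_div_of_le (a := 2 * (k:ℝ) + 1) (b := 2 * (k:ℝ) + 1 + β) (by positivity) (by linarith)
      linarith
  have H := hasSum_integral_of_summable_integral_norm (μ := volume.restrict (Ioi (1:ℝ))) (F := F) hi
    (by simp only [hn]; exact hsum)
  simp only [hv] at H
  refine hs_conv H (fun _ => rfl) ?_
  refine setIntegral_congr_fun measurableSet_Ioi fun y hy => ?_
  have hy1 : 1 < y := hy
  have hy0 : 0 < y := by linarith
  have hyq : 1 < y ^ 2 := by nlinarith
  have hg := (hasSum_geometric_of_lt_one (r := (y ^ 2)⁻¹) (by positivity) (inv_lt_one_of_one_lt₀ hyq)).mul_left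
    ((y ^ β - 1) * (y ^ 2)⁻¹)
  have : (fun i => F i y) = fun i : ℕ => (y ^ β - 1) * (y ^ 2)⁻¹ * ((y ^ 2)⁻¹) ^ i := by
    ext i
    simp only [F]
    rw [Real.rpow_add hy0, Real.rpow_neg hy0.le, Real.rpow_natCast, pow_add, pow_mul, mul_inv, inv_pow]
    ring
  show phiK β y = ∑' i, F i y
  have h1 : y ^ 2 - 1 ≠ 0 := by linarith
  rw [this, hg.tsum_eq, phiK]
  field_simp

lemma phiK_nonneg_le (β : ℝ) (hβ : β ∈ Set.Ioo (0:ℝ) 1) (y : ℝ) (hy : 1 < y) :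
    0 ≤ phiK β y ∧ phiK β y ≤ y ^ (β - 2) := by
  have hy0 : 0 < y := by linarith
  have hyq : 1 < y ^ 2 := by nlinarith
  have h1 : 1 ≤ y ^ β := Real.one_le_rpow hy.le hβ.1.le
  have h2 : y ^ (β - 2) ≤ 1 := Real.rpow_le_one_of_one_le_of_nonpos hy.le (by linarith [hβ.2])
  have h3 : y ^ β = y ^ (β - 2) * y ^ 2 := by
    rw [← Real.rpow_natCast, ← Real.rpow_add hy0]; congr 1; push_cast; ring
  unfold phiK
  refine ⟨div_nonneg (by linarith) (by linarith), ?_⟩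
  rw [div_le_iff₀ (by linarith), h3]
  linarith

lemma phiK_meas (β : ℝ) : Measurable (phiK β) := by
  unfold phiK
  fun_prop

lemma phiK_int_right (β : ℝ) (hβ : β ∈ Set.Ioo (0:ℝ) 1) : IntegrableOn (phiK β) (Ioi 1) := by
  refine (integrableOn_Ioi_rpow_of_lt (a := β - 2) (by linarith [hβ.2]) one_pos).mono'
    (phiK_meas β).aestronglyMeasurable ?_
  filter_upwards [ae_restrict_mem measurableSet_Ioi] with y hy
  have := phiK_nonneg_le β hβ y hy
  rw [Real.norm_of_nonneg this.1]
  exact this.2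

lemma phiK_int_left (β : ℝ) (hβ : β ∈ Set.Ioo (0:ℝ) 1) : IntegrableOn (phiK β) (Ioo 0 1) := by
  refine Measure.integrableOn_of_bounded (M := 1) (by simp)
    (phiK_meas β).aestronglyMeasurable ?_
  filter_upwards [ae_restrict_mem measurableSet_Ioo] with y hy
  have hy1 := hy.1
  have hy2 := hy.2
  have hyq : y ^ 2 < 1 := by nlinarith
  have h1 : y ^ β ≤ 1 := Real.rpow_le_one hy1.le hy2.le hβ.1.le
  have h2 : y ^ (2:ℝ) ≤ y ^ β := Real.rpow_le_rpow_of_exponent_ge hy1 hy2.le (by linarith [hβ.2])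
  rw [Real.rpow_two] at h2
  unfold phiK
  rw [Real.norm_eq_abs, abs_div, abs_of_nonpos (by linarith), abs_of_neg (by linarith : y ^ 2 - 1 < 0),
    div_le_one (by linarith)]
  linarith

lemma phiK_int (β : ℝ) (hβ : β ∈ Set.Ioo (0:ℝ) 1) : IntegrableOn (phiK β) (Ioi 0) := by
  have h := (((integrableOn_Ioc_iff_integrableOn_Ioo (μ := volume)).2 (phiK_int_left β hβ)).union
    (phiK_int_right β hβ))
  rwa [Ioc_union_Ioi_eq_Ioi zero_le_one] at h

lemma phiK_integral (β : ℝ) (hβ : β ∈ Set.Ioo (0:ℝ) 1) :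
    ∫ y in Ioi (0:ℝ), phiK β y = π / 2 * Real.tan (π * β / 2) := by
  have h := (phiK_hasSum_left β hβ).add (phiK_hasSum_right β hβ)
  have h' : (∫ y in Ioo (0:ℝ) 1, phiK β y) + ∫ y in Ioi (1:ℝ), phiK β y = π / 2 * Real.tan (π * β / 2) := by
    refine h.unique ?_
    convert aux_tan_hasSum β hβ using 1
    ext k
    ring
  rw [← h', ← integral_Ioc_eq_integral_Ioo, ← setIntegral_union (Ioc_disjoint_Ioi le_rfl) measurableSet_Ioi
    ((integrableOn_Ioc_iff_integrableOn_Ioo (μ := volume)).2 (phiK_int_left β hβ)) (phiK_int_right β hβ), Ioc_union_Ioi_eq_Ioi zero_le_one]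

lemma phiK_trunc (β : ℝ) (hβ : β ∈ Set.Ioo (0:ℝ) 1) (M : ℝ) (hM : 1 ≤ M) :
    |(∫ y in (0:ℝ)..M, phiK β y) - π / 2 * Real.tan (π * β / 2)| ≤ M ^ (β - 1) / (1 - β) := by
  have h0 := phiK_int β hβ
  have hM0 : 0 < M := by linarith
  have e : (∫ y in (0:ℝ)..M, phiK β y) + ∫ y in Ioi M, phiK β y = π / 2 * Real.tan (π * β / 2) := by
    rw [← phiK_integral β hβ, intervalIntegral.integral_of_le hM0.le,
      ← setIntegral_union (Ioc_disjoint_Ioi le_rfl) measurableSet_Ioi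
       (h0.mono_set Ioc_subset_Ioi_self) (h0.mono_set (Ioi_subset_Ioi hM0.le)), Ioc_union_Ioi_eq_Ioi hM0.le]
  have hb : ∀ y ∈ Ioi M, 0 ≤ phiK β y ∧ phiK β y ≤ y ^ (β - 2) := fun y hy =>
    phiK_nonneg_le β hβ y (lt_of_le_of_lt hM hy)
  have h1 : 0 ≤ ∫ y in Ioi M, phiK β y := setIntegral_nonneg measurableSet_Ioi fun y hy => (hb y hy).1
  have h2 : ∫ y in Ioi M, phiK β y ≤ ∫ y in Ioi M, y ^ (β - 2) :=
    setIntegral_mono_on (h0.mono_set (Ioi_subset_Ioi hM0.le))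
      (integrableOn_Ioi_rpow_of_lt (by linarith [hβ.2]) hM0) measurableSet_Ioi fun y hy => (hb y hy).2
  rw [integral_Ioi_rpow_of_lt (by linarith [hβ.2]) hM0, ← neg_div_neg_eq] at h2
  have e2 : - - M ^ (β - 2 + 1) / -(β - 2 + 1) = M ^ (β - 1) / (1 - β) := by
    rw [neg_neg]; congr 1 <;> [congr 1; skip] <;> ring
  rw [e2] at h2
  rw [abs_le]
  constructor <;> linarith

lemma pv_eq (G q : ℝ → ℝ) (c u : ℝ) (hu : |u| < π) (hq : IntegrableOn q (Ioo (-π) π))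
    (h : ∀ x ∈ Ioo (-π) π, x ≠ u → x ≠ 0 → G x = q x + c * (x - u)⁻¹) :
    pvInt G u = (∫ x in Ioo (-π) π, q x) + c * Real.log ((π - u) / (π + u)) := by
  obtain ⟨hu1, hu2⟩ := abs_lt.1 hu
  apply Tendsto.limUnder_eq
  let S : ℝ → Set ℝ := fun ε => {x : ℝ | ε < |x - u|}
  have hSm : ∀ ε, MeasurableSet (S ε) := fun ε => measurableSet_lt measurable_const (by fun_prop)
  have hlim : Tendsto (fun ε : ℝ => (∫ x in Ioo (-π) π, (S ε).indicator q x) +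
      c * Real.log ((π - u) / (π + u))) (nhdsWithin (0:ℝ) (Set.Ioi 0))
      (nhds ((∫ x in Ioo (-π) π, q x) + c * Real.log ((π - u) / (π + u)))) := by
    refine Tendsto.add_const _ ?_
    refine tendsto_integral_filter_of_dominated_convergence (fun x => ‖q x‖) ?_ ?_ hq.norm ?_
    · exact Eventually.of_forall fun ε => hq.aestronglyMeasurable.indicator (hSm ε)
    · exact Eventually.of_forall fun ε => Eventually.of_forall fun x => norm_indicator_le_norm_self _ _
    · have hne : ∀ᵐ x ∂(volume.restrict (Ioo (-π) π)), x ≠ u :=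
        ae_restrict_of_ae (by simp [ae_iff])
      filter_upwards [hne] with x hx
      refine tendsto_const_nhds.congr' ?_
      have : Iio |x - u| ∈ nhdsWithin (0:ℝ) (Set.Ioi 0) :=
        mem_nhdsWithin_of_mem_nhds (Iio_mem_nhds (abs_pos.2 (sub_ne_zero.2 hx)))
      filter_upwards [this] with ε hε
      rw [indicator_of_mem]
      exact hε
  refine hlim.congr' ?_
  have h1 : Ioo (0:ℝ) (π - |u|) ∈ nhdsWithin (0:ℝ) (Set.Ioi 0) := Ioo_mem_nhdsGT (by linarith)
  filter_upwards [h1] with ε hε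
  obtain ⟨he0, he1⟩ := hε
  have hau := le_abs_self u
  have hau' := neg_abs_le u
  have hset : {x : ℝ | x ∈ Set.Ioo (-π) π ∧ ε < |x - u|} = Ioo (-π) (u - ε) ∪ Ioo (u + ε) π := by
    ext x
    simp only [mem_ofPred_eq, mem_Ioo, mem_union, lt_abs]
    constructor
    · rintro ⟨⟨a, b⟩, d | d⟩
      · right; constructor <;> linarith
      · left; constructor <;> linarith
    · rintro (⟨a, b⟩ | ⟨a, b⟩)
      · exact ⟨⟨a, by linarith⟩, Or.inr (by linarith)⟩
      · exact ⟨⟨by linarith, b⟩, Or.inl (by linarith)⟩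
  have hset2 : {x : ℝ | x ∈ Set.Ioo (-π) π ∧ ε < |x - u|} = Ioo (-π) π ∩ S ε := rfl
  have hdis : Disjoint (Ioo (-π) (u - ε)) (Ioo (u + ε) π) := by
    rw [Set.disjoint_left]
    rintro x ⟨_, hx⟩ ⟨hx', _⟩
    linarith
  have hI1 : IntegrableOn (fun x => (x - u)⁻¹) (Ioo (-π) (u - ε)) := by
    refine (ContinuousOn.integrableOn_Icc ?_).mono_set Ioo_subset_Icc_self
    refine ContinuousOn.inv₀ (by fun_prop) fun x hx => ?_
    have := hx.2
    exact ne_of_lt (by linarith)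
  have hI2 : IntegrableOn (fun x => (x - u)⁻¹) (Ioo (u + ε) π) := by
    refine (ContinuousOn.integrableOn_Icc ?_).mono_set Ioo_subset_Icc_self
    refine ContinuousOn.inv₀ (by fun_prop) fun x hx => ?_
    have := hx.1
    exact ne_of_gt (by linarith)
  have hv1 : ∫ x in Ioo (-π) (u - ε), (x - u)⁻¹ = Real.log (ε / (π + u)) := by
    rw [← integral_Ioc_eq_integral_Ioo, ← intervalIntegral.integral_of_le (by linarith),
      intervalIntegral.integral_comp_sub_right (fun x => x⁻¹), integral_inv_of_neg (by linarith) (by linarith),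
      ← neg_div_neg_eq]
    congr 1
    congr 1 <;> ring
  have hv2 : ∫ x in Ioo (u + ε) π, (x - u)⁻¹ = Real.log ((π - u) / ε) := by
    rw [← integral_Ioc_eq_integral_Ioo, ← intervalIntegral.integral_of_le (by linarith),
      intervalIntegral.integral_comp_sub_right (fun x => x⁻¹), integral_inv_of_pos (by linarith) (by linarith)]
    congr 1
    congr 1; ring
  have hint : ∫ x in {x : ℝ | x ∈ Set.Ioo (-π) π ∧ ε < |x - u|}, G x =
      ∫ x in {x : ℝ | x ∈ Set.Ioo (-π) π ∧ ε < |x - u|}, (q x + c * (x - u)⁻¹) := by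
    have hm : MeasurableSet {x : ℝ | x ∈ Set.Ioo (-π) π ∧ ε < |x - u|} := by
      rw [hset2]; exact measurableSet_Ioo.inter (hSm ε)
    refine setIntegral_congr_ae hm ?_
    have hne : ∀ᵐ x : ℝ, x ≠ 0 := by simp [ae_iff]
    filter_upwards [hne] with x hx hx'
    refine h x hx'.1 ?_ hx
    rintro rfl
    have := hx'.2
    simp at this
    linarith
  have hIU : IntegrableOn (fun x => c * (x - u)⁻¹) {x : ℝ | x ∈ Set.Ioo (-π) π ∧ ε < |x - u|} := by
    rw [hset]
    exact (hI1.union hI2).const_mul c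
  rw [hint, integral_add (hq.mono_set fun x hx => hx.1) hIU, setIntegral_indicator (hSm ε), ← hset2]
  congr 1
  rw [integral_const_mul, hset, setIntegral_union hdis measurableSet_Ioo hI1 hI2, hv1, hv2,
    Real.log_div (by linarith) (by linarith), Real.log_div (by linarith) (by linarith),
    Real.log_div (by linarith) (by linarith)]
  ring

/-- The odd power function `sgn(x) |x|^(β-1)`. -/
noncomputable def sK (β x : ℝ) : ℝ := x * |x| ^ (β - 2)

lemma sK_pos (β x : ℝ) (hx : 0 < x) : sK β x = x ^ (β - 1) := by
  unfold sK
  rw [abs_of_pos hx]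
  have : β - 1 = 1 + (β - 2) := by ring
  rw [this, Real.rpow_add hx, Real.rpow_one]

lemma sK_neg (β x : ℝ) : sK β (-x) = - sK β x := by
  unfold sK
  rw [abs_neg]; ring

lemma sK_abs (β x : ℝ) (hx : x ≠ 0) : |sK β x| = |x| ^ (β - 1) := by
  have h := sK_pos β |x| (abs_pos.2 hx)
  rw [← h]
  unfold sK
  rw [abs_mul, abs_abs, abs_of_nonneg (a := |x| ^ (β - 2)) (by positivity)]

lemma sK_meas (β : ℝ) : Measurable (sK β) := by
  unfold sK
  fun_prop

lemma sK_ii (β : ℝ) (hβ : β ∈ Set.Ioo (0:ℝ) 1) (a b : ℝ) : IntervalIntegrable (sK β) volume a b := by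
  have h0 : ∀ M : ℝ, 0 ≤ M → IntervalIntegrable (sK β) volume 0 M := by
    intro M hM
    refine (intervalIntegral.intervalIntegrable_rpow' (a := 0) (b := M) (r := β - 1)
      (by linarith [hβ.1])).congr ?_
    intro x hx
    rw [uIoc_of_le hM] at hx
    exact (sK_pos β x hx.1).symm
  have h1 : ∀ M : ℝ, IntervalIntegrable (sK β) volume 0 M := by
    intro M
    rcases le_total 0 M with hM | hM
    · exact h0 M hM
    · have := (h0 (-M) (by linarith)).neg
      rw [IntervalIntegrable.iff_comp_neg] at this
      simp only [neg_neg, neg_zero] at this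
      refine this.congr ?_
      intro x _
      simp [sK_neg]
  exact (h1 a).symm.trans (h1 b)

lemma sK_intOn (β : ℝ) (hβ : β ∈ Set.Ioo (0:ℝ) 1) : IntegrableOn (sK β) (Ioo (-π) π) := by
  have := sK_ii β hβ (-π) π
  rwa [intervalIntegrable_iff_integrableOn_Ioo_of_le (by linarith [Real.pi_pos])] at this

lemma setInt_eq_interval (F : ℝ → ℝ) : ∫ x in Ioo (-π) π, F x = ∫ x in (-π)..π, F x := by
  rw [intervalIntegral.integral_of_le (by linarith [Real.pi_pos]), integral_Ioc_eq_integral_Ioo]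

lemma sK_zero (β : ℝ) : ∫ x in Ioo (-π) π, sK β x = 0 := by
  rw [setInt_eq_interval]
  have h := intervalIntegral.integral_comp_neg (a := -π) (b := π) (sK β)
  simp only [sK_neg, neg_neg, intervalIntegral.integral_neg] at h
  linarith

/-- Difference quotient. -/
noncomputable def qK (β u x : ℝ) : ℝ := (sK β x - sK β u) / (x - u)

lemma qK_intOn (β : ℝ) (hβ : β ∈ Set.Ioo (0:ℝ) 1) (u : ℝ) (hu : u ≠ 0) :
    IntegrableOn (qK β u) (Ioo (-π) π) := by
  have hr : 0 < |u| / 2 := by positivity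
  have hball : ∀ x ∈ Metric.closedBall u (|u| / 2), x ≠ 0 := by
    rintro x hx rfl
    rw [Metric.mem_closedBall, Real.dist_eq, zero_sub, abs_neg] at hx
    linarith
  have hd : ∀ x : ℝ, x ≠ 0 → DifferentiableAt ℝ (sK β) x := by
    intro x hx
    unfold sK
    refine differentiableAt_id.mul (DifferentiableAt.rpow_const (differentiableAt_abs hx) (Or.inl (abs_ne_zero.2 hx)))
  have hm : Measurable (qK β u) := by
    unfold qK
    exact ((sK_meas β).sub_const _).div (by fun_prop)
  have h1 : IntegrableOn (qK β u) (Metric.closedBall u (|u| / 2)) := by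
    have hc : ContinuousOn (dslope (sK β) u) (Metric.closedBall u (|u| / 2)) := by
      rw [continuousOn_dslope (Metric.closedBall_mem_nhds u hr)]
      exact ⟨fun x hx => (hd x (hball x hx)).continuousAt.continuousWithinAt, hd u hu⟩
    refine (hc.integrableOn_compact (isCompact_closedBall u _)).congr_fun_ae ?_
    have hne : ∀ᵐ x ∂(volume.restrict (Metric.closedBall u (|u| / 2))), x ≠ u :=
        ae_restrict_of_ae (by simp [ae_iff])
    filter_upwards [hne] with x hx
    rw [dslope_of_ne _ hx, slope_def_field]
    rfl
  have h2 : IntegrableOn (qK β u) (Ioo (-π) π \ Metric.closedBall u (|u| / 2)) := by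
    have hb : IntegrableOn (fun x => (|sK β x| + |sK β u|) / (|u| / 2)) (Ioo (-π) π) := by
      refine Integrable.div_const (Integrable.add (sK_intOn β hβ).norm ?_) _
      exact integrableOn_const (by simp)
    refine Integrable.mono' (hb.mono_set sdiff_subset) hm.aestronglyMeasurable ?_
    filter_upwards [ae_restrict_mem (measurableSet_Ioo.diff Metric.isClosed_closedBall.measurableSet)] with x hx
    have hx2 := hx.2
    rw [Metric.mem_closedBall, Real.dist_eq, not_le] at hx2
    unfold qK
    rw [norm_div, Real.norm_eq_abs, Real.norm_eq_abs]
    gcongr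
    exact abs_sub _ _
  refine (h1.union h2).mono_set ?_
  intro x hx
  by_cases h : x ∈ Metric.closedBall u (|u| / 2)
  · exact Or.inl h
  · exact Or.inr ⟨hx, h⟩

lemma qK_even (β u : ℝ) : ∫ x in Ioo (-π) π, qK β (-u) x = ∫ x in Ioo (-π) π, qK β u x := by
  rw [setInt_eq_interval, setInt_eq_interval]
  have h := intervalIntegral.integral_comp_neg (a := -π) (b := π) (qK β (-u))
  rw [neg_neg] at h
  rw [← h]
  congr 1
  ext x
  unfold qK
  rw [sK_neg, sK_neg, ← neg_div_neg_eq]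
  congr 1 <;> ring

lemma qK_fold (β u x : ℝ) (hu : 0 < u) (hx : 0 < x) (hxu : x ≠ u) :
    qK β u x + qK β u (-x) = 2 * u ^ (β - 2) * phiK β (x / u) := by
  have e1 : u ^ (β - 2) = u ^ (β - 1) / u := by
    rw [← Real.rpow_sub_one hu.ne']; congr 1; ring
  have e2 : ∀ z : ℝ, 0 < z → z ^ β = z * z ^ (β - 1) := fun z hz => by
    rw [Real.rpow_sub_one hz.ne']; field_simp
  unfold qK phiK
  rw [sK_neg, sK_pos β x hx, sK_pos β u hu, e1, Real.div_rpow hx.le hu.le, e2 x hx, e2 u hu]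
  have hb : 0 < u ^ (β - 1) := by positivity
  generalize u ^ (β - 1) = b at *
  generalize x ^ (β - 1) = a at *
  have h1 : x - u ≠ 0 := sub_ne_zero.2 hxu
  have h2 : -x - u ≠ 0 := by linarith
  have h3 : (x / u) ^ 2 - 1 = (x - u) * (x + u) / u ^ 2 := by field_simp; ring
  have h4 : -x - u = -(x + u) := by ring
  have h5 : x + u ≠ 0 := by linarith
  rw [h3, h4]
  field_simp
  ring

lemma qK_val (β : ℝ) (hβ : β ∈ Set.Ioo (0:ℝ) 1) (u : ℝ) (hu : 0 < u) :
    ∫ x in Ioo (-π) π, qK β u x = 2 * u ^ (β - 1) * ∫ y in (0:ℝ)..(π / u), phiK β y := by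
  have hp := Real.pi_pos
  have hi := qK_intOn β hβ u hu.ne'
  rw [← intervalIntegrable_iff_integrableOn_Ioo_of_le (by linarith)] at hi
  have hiL : IntervalIntegrable (qK β u) volume (-π) 0 := hi.mono_set (by
    rw [uIcc_of_le (by linarith), uIcc_of_le (by linarith)]; exact Icc_subset_Icc le_rfl hp.le)
  have hiR : IntervalIntegrable (qK β u) volume 0 π := hi.mono_set (by
    rw [uIcc_of_le (by linarith), uIcc_of_le (by linarith)]; exact Icc_subset_Icc (by linarith) le_rfl)
  have hL := intervalIntegral.integral_comp_neg (a := 0) (b := π) (qK β u)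
  rw [neg_zero] at hL
  have hiL' : IntervalIntegrable (fun x => qK β u (-x)) volume 0 π := by
    rw [IntervalIntegrable.iff_comp_neg] at hiL
    simpa using hiL.symm
  rw [setInt_eq_interval, ← intervalIntegral.integral_add_adjacent_intervals hiL hiR, ← hL, add_comm,
    ← intervalIntegral.integral_add hiR hiL']
  have hc : ∫ x in (0:ℝ)..π, (qK β u x + qK β u (-x)) = ∫ x in (0:ℝ)..π, 2 * u ^ (β - 2) * phiK β (x / u) := by
    refine intervalIntegral.integral_congr_ae ?_
    have hne : ∀ᵐ x : ℝ, x ≠ u := by simp [ae_iff]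
    filter_upwards [hne] with x hx hx'
    rw [uIoc_of_le hp.le] at hx'
    exact qK_fold β u x hu hx'.1 hx
  rw [hc, intervalIntegral.integral_const_mul, intervalIntegral.integral_comp_div _ hu.ne', smul_eq_mul, zero_div]
  have e1 : u ^ (β - 1) = u ^ (β - 2) * u := by
    rw [← Real.rpow_add_one hu.ne']; congr 1; ring
  rw [e1]
  ring

lemma qK_bound (β : ℝ) (hβ : β ∈ Set.Ioo (0:ℝ) 1) (u : ℝ) (hu : u ≠ 0) (hu1 : |u| < 1) :
    |(∫ x in Ioo (-π) π, qK β u x) - π * Real.tan (π * β / 2) * |u| ^ (β - 1)| ≤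
      2 * π ^ (β - 1) / (1 - β) := by
  have hp := Real.pi_gt_three
  have hv : 0 < |u| := abs_pos.2 hu
  have he : ∫ x in Ioo (-π) π, qK β u x = ∫ x in Ioo (-π) π, qK β |u| x := by
    rcases abs_choice u with h | h
    · rw [h]
    · rw [h, qK_even]
  rw [he]
  generalize |u| = v at *
  rw [qK_val β hβ v hv]
  have ht := phiK_trunc β hβ (π / v) (by rw [le_div_iff₀ hv]; linarith)
  have hvb : 0 < v ^ (β - 1) := by positivity
  rw [Real.div_rpow (by linarith) hv.le] at ht
  have e : 2 * v ^ (β - 1) * (∫ y in (0:ℝ)..(π / v), phiK β y) - π * Real.tan (π * β / 2) * v ^ (β - 1) =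
    2 * v ^ (β - 1) * ((∫ y in (0:ℝ)..(π / v), phiK β y) - π / 2 * Real.tan (π * β / 2)) := by ring
  rw [e, abs_mul, abs_of_pos (by positivity)]
  calc _ ≤ 2 * v ^ (β - 1) * (π ^ (β - 1) / v ^ (β - 1) / (1 - β)) := by gcongr
    _ = _ := by field_simp

lemma log_bound (u : ℝ) (hu1 : |u| < 1) : |Real.log ((π - u) / (π + u))| ≤ |u| := by
  have hp := Real.pi_gt_three
  obtain ⟨h1, h2⟩ := abs_lt.1 hu1
  have hA : 0 < (π - u) / (π + u) := div_pos (by linarith) (by linarith)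
  have a1 := Real.log_le_sub_one_of_pos hA
  have a2 := Real.one_sub_inv_le_log_of_pos hA
  have b1 : (π - u) / (π + u) - 1 ≤ |u| := by
    rw [div_sub_one (by linarith), div_le_iff₀ (by linarith)]
    rcases abs_cases u with ⟨h, _⟩ | ⟨h, _⟩ <;> rw [h] <;> nlinarith
  have b2 : -|u| ≤ 1 - ((π - u) / (π + u))⁻¹ := by
    rw [inv_div, one_sub_div (by linarith), le_div_iff₀ (by linarith)]
    rcases abs_cases u with ⟨h, _⟩ | ⟨h, _⟩ <;> rw [h] <;> nlinarith
  rw [abs_le]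
  constructor <;> linarith

lemma deriv_perExt (β x : ℝ) (hx : x ∈ Ioo (-π) π) (hx0 : x ≠ 0) :
    deriv (perExt (fun x => |x| ^ β)) x = β * sK β x := by
  have hp := Real.pi_pos
  have hev : perExt (fun x => |x| ^ β) =ᶠ[nhds x] fun y => |y| ^ β := by
    filter_upwards [Ioo_mem_nhds hx.1 hx.2] with y hy
    have hf : ⌊(y + π) / (2 * π)⌋ = 0 := by
      rw [Int.floor_eq_zero_iff]
      have := hy.1
      have := hy.2
      exact ⟨div_nonneg (by linarith) (by linarith), by rw [div_lt_one (by linarith)]; linarith⟩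
    unfold perExt
    rw [hf]
    simp
  rw [hev.deriv_eq]
  have hd := (hasDerivAt_abs hx0).rpow_const (p := β) (Or.inl (abs_ne_zero.2 hx0))
  rw [hd.deriv]
  rcases lt_or_gt_of_ne hx0 with h | h
  · have e : sK β x = - (-x) ^ (β - 1) := by
      rw [← sK_pos β (-x) (by linarith), sK_neg, neg_neg]
    rw [e, sign_neg h, abs_of_neg h]
    simp
  · rw [sK_pos β x h, sign_pos h, abs_of_pos h]
    simp

lemma denom_bound (n : ℤ) (hn : n ≠ 0) (u x : ℝ) (hu : |u| < 1) (hx : x ∈ Ioo (-π) π) :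
    (π - 1) * |(n:ℝ)| ≤ |x - u + 2 * π * n| ∧ 1 ≤ |(n:ℝ)| ∧ |x - u| ≤ π + 1 := by
  have hp := Real.pi_gt_three
  have hn1 : (1:ℝ) ≤ |(n:ℝ)| := by
    have := Int.one_le_abs hn
    exact_mod_cast this
  obtain ⟨h1, h2⟩ := abs_lt.1 hu
  have hxu : |x - u| ≤ π + 1 := by
    rw [abs_le]; constructor <;> linarith [hx.1, hx.2]
  refine ⟨?_, hn1, hxu⟩
  have h3 : |2 * π * (n:ℝ)| = 2 * π * |(n:ℝ)| := by
    rw [abs_mul, abs_of_pos (by positivity)]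
  have h4 : |2 * π * (n:ℝ)| ≤ |x - u + 2 * π * n| + |x - u| := by
    have := abs_sub (x - u + 2 * π * n) (x - u)
    rwa [add_sub_cancel_left] at this
  nlinarith

lemma term_bound (β : ℝ) (hβ : β ∈ Set.Ioo (0:ℝ) 1) (u : ℝ) (hu : |u| < 1) (n : ℤ) (hn : n ≠ 0) :
    |pvInt (fun x => deriv (perExt (fun x => |x| ^ β)) x / (x - u + 2 * π * (n:ℝ))) u| ≤
      (∫ x in Ioo (-π) π, |sK β x|) * (1 / (n:ℝ) ^ 2) := by
  have hp := Real.pi_gt_three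
  have hs := sK_intOn β hβ
  have hb0 := hβ.1
  have hb1 := hβ.2
  have hq : IntegrableOn (fun x => β * sK β x / (x - u + 2 * π * (n:ℝ))) (Ioo (-π) π) := by
    refine Integrable.mono' hs.norm
      (((sK_meas β).const_mul β).div (by fun_prop)).aestronglyMeasurable ?_
    filter_upwards [ae_restrict_mem measurableSet_Ioo] with x hx
    obtain ⟨h1, h2, h3⟩ := denom_bound n hn u x hu hx
    have h4 : 1 ≤ |x - u + 2 * π * n| := by nlinarith
    rw [norm_div, norm_mul, Real.norm_of_nonneg hb0.le, Real.norm_eq_abs (x - u + 2 * π * n),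
      div_le_iff₀ (by linarith)]
    have : 0 ≤ ‖sK β x‖ := norm_nonneg _
    calc β * ‖sK β x‖ ≤ 1 * ‖sK β x‖ := by gcongr
      _ ≤ ‖sK β x‖ * |x - u + 2 * π * n| := by nlinarith
  rw [pv_eq _ (fun x => β * sK β x / (x - u + 2 * π * (n:ℝ))) 0 u (by linarith) hq
    (fun x hx _ hx0 => by simp only [deriv_perExt β x hx hx0]; ring), zero_mul, add_zero]
  have hz : ∫ x in Ioo (-π) π, β * sK β x / (2 * π * (n:ℝ)) = 0 := by
    rw [integral_div, integral_const_mul, sK_zero]; simp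
  have hzi : IntegrableOn (fun x => β * sK β x / (2 * π * (n:ℝ))) (Ioo (-π) π) :=
    (hs.const_mul β).div_const _
  rw [← sub_zero (∫ x in Ioo (-π) π, β * sK β x / (x - u + 2 * π * (n:ℝ))), ← hz, ← integral_sub hq hzi,
    ← integral_mul_const, ← Real.norm_eq_abs]
  refine norm_integral_le_of_norm_le (hs.norm.mul_const _) ?_
  filter_upwards [ae_restrict_mem measurableSet_Ioo] with x hx
  obtain ⟨h1, h2, h3⟩ := denom_bound n hn u x hu hx
  have h4 : 1 ≤ |x - u + 2 * π * n| := by nlinarith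
  have hD : x - u + 2 * π * n ≠ 0 := abs_pos.1 (by linarith)
  have hN : (n:ℝ) ≠ 0 := by exact_mod_cast hn
  have e : β * sK β x / (x - u + 2 * π * n) - β * sK β x / (2 * π * n) =
      β * (sK β x * (-(x - u) / ((x - u + 2 * π * n) * (2 * π * n)))) := by
    field_simp
    ring
  have hk : ‖-(x - u) / ((x - u + 2 * π * n) * (2 * π * n))‖ ≤ 1 / (n:ℝ) ^ 2 := by
    rw [norm_div, norm_neg, norm_mul, norm_mul, Real.norm_of_nonneg (by positivity : 0 ≤ 2 * π),
      Real.norm_eq_abs, Real.norm_eq_abs, Real.norm_eq_abs, ← sq_abs (n:ℝ)]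
    rw [div_le_div_iff₀ (by positivity) (by positivity)]
    calc |x - u| * |(n:ℝ)| ^ 2 ≤ (π + 1) * |(n:ℝ)| ^ 2 := by gcongr
      _ ≤ ((π - 1) * (2 * π)) * |(n:ℝ)| ^ 2 := by gcongr; nlinarith
      _ = 1 * (((π - 1) * |(n:ℝ)|) * (2 * π * |(n:ℝ)|)) := by ring
      _ ≤ _ := by gcongr
  rw [e, norm_mul, norm_mul, Real.norm_of_nonneg hb0.le]
  calc β * (‖sK β x‖ * ‖-(x - u) / ((x - u + 2 * π * n) * (2 * π * n))‖)
      ≤ 1 * (‖sK β x‖ * (1 / (n:ℝ) ^ 2)) := by gcongr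
    _ = _ := by rw [one_mul, Real.norm_eq_abs]

lemma term_zero (β : ℝ) (hβ : β ∈ Set.Ioo (0:ℝ) 1) (u : ℝ) (hu0 : u ≠ 0) (hu : |u| < 1) :
    |pvInt (fun x => deriv (perExt (fun x => |x| ^ β)) x / (x - u + 2 * π * ((0:ℤ):ℝ))) u -
      π * (β * Real.tan (π * β / 2) * |u| ^ (β - 1))| ≤ 2 * π ^ (β - 1) / (1 - β) + 1 := by
  have hp := Real.pi_gt_three
  have hb0 := hβ.1
  have hb1 := hβ.2
  have hq := (qK_intOn β hβ u hu0).const_mul β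
  rw [pv_eq _ (fun x => β * qK β u x) (β * sK β u) u (by linarith) hq
    (fun x hx hxu hx0 => by
      have : x - u ≠ 0 := sub_ne_zero.2 hxu
      simp only [deriv_perExt β x hx hx0, qK, Int.cast_zero, mul_zero, add_zero]
      field_simp
      ring), integral_const_mul]
  have h1 := qK_bound β hβ u hu0 hu
  have h2 : |sK β u * Real.log ((π - u) / (π + u))| ≤ 1 := by
    rw [abs_mul, sK_abs β u hu0]
    calc _ ≤ |u| ^ (β - 1) * |u| := mul_le_mul_of_nonneg_left (log_bound u hu) (by positivity)
      _ = |u| ^ β := by rw [← Real.rpow_add_one (abs_ne_zero.2 hu0)]; congr 1; ring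
      _ ≤ 1 := Real.rpow_le_one (abs_nonneg u) hu.le hb0.le
  have e : β * (∫ x in Ioo (-π) π, qK β u x) + β * sK β u * Real.log ((π - u) / (π + u)) -
      π * (β * Real.tan (π * β / 2) * |u| ^ (β - 1)) =
      β * (((∫ x in Ioo (-π) π, qK β u x) - π * Real.tan (π * β / 2) * |u| ^ (β - 1)) +
        sK β u * Real.log ((π - u) / (π + u))) := by ring
  rw [e, abs_mul, abs_of_pos hb0]
  have h3 := (abs_add_le ((∫ x in Ioo (-π) π, qK β u x) - π * Real.tan (π * β / 2) * |u| ^ (β - 1))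
    (sK β u * Real.log ((π - u) / (π + u)))).trans (add_le_add h1 h2)
  calc _ ≤ 1 * (2 * π ^ (β - 1) / (1 - β) + 1) := by gcongr
    _ = _ := one_mul _

/-- For `β ∈ (0,1)`, `K_∞ |u|^β = -β tan(πβ/2) |u|^(β-1) + O(1)` as `u → 0`. -/
theorem Kinf_abs_rpow (β : ℝ) (hβ : β ∈ Set.Ioo (0:ℝ) 1) :
    ∃ C : ℝ, 0 < C ∧ ∃ δ ∈ Set.Ioo (0:ℝ) π, ∀ u : ℝ, 0 < |u| → |u| < δ →
      |Kinf (perExt (fun x => |x| ^ β)) u + β * Real.tan (π * β / 2) * |u| ^ (β - 1)| ≤ C := by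

  have hp := Real.pi_gt_three
  have hb0 := hβ.1
  have hb1 := hβ.2
  have hsum : Summable (fun n : ℤ => (∫ x in Ioo (-π) π, |sK β x|) * (1 / (n:ℝ) ^ 2)) :=
    (Real.summable_one_div_int_pow.2 (by norm_num)).mul_left _
  have hSI : 0 ≤ ∫ x in Ioo (-π) π, |sK β x| := integral_nonneg fun x => abs_nonneg _
  have hS0 : 0 ≤ ∑' n : ℤ, (∫ x in Ioo (-π) π, |sK β x|) * (1 / (n:ℝ) ^ 2) :=
    tsum_nonneg fun n => mul_nonneg hSI (by positivity)
  have hC : 0 < 2 * π ^ (β - 1) / (1 - β) + 1 := by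
    have : 0 ≤ 2 * π ^ (β - 1) / (1 - β) := div_nonneg (by positivity) (by linarith)
    linarith
  refine ⟨2 * π ^ (β - 1) / (1 - β) + 1 + ∑' n : ℤ, (∫ x in Ioo (-π) π, |sK β x|) * (1 / (n:ℝ) ^ 2),
    by linarith, 1, ⟨one_pos, by linarith⟩, ?_⟩
  intro u hu0 hu
  have hu0' : u ≠ 0 := abs_pos.1 hu0
  have h0 := term_zero β hβ u hu0' hu
  have hn := term_bound β hβ u hu
  unfold Kinf periodicHilbert
  generalize hT : (fun n : ℤ => pvInt (fun x => deriv (perExt (fun x => |x| ^ β)) x / (x - u + 2 * π * (n:ℝ))) u) = T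
  have hT' : ∀ n : ℤ, pvInt (fun x => deriv (perExt (fun x => |x| ^ β)) x / (x - u + 2 * π * (n:ℝ))) u = T n :=
    fun n => congrFun hT n
  rw [hT' 0] at h0
  simp only [hT'] at hn
  have hb : ∀ n : ℤ, ‖(if n = 0 then 0 else T n : ℝ)‖ ≤ (∫ x in Ioo (-π) π, |sK β x|) * (1 / (n:ℝ) ^ 2) := by
    intro n
    split_ifs with h
    · simp [h]
    · exact hn n h
  have hTs : Summable T := by
    have h1 : Summable (fun n : ℤ => (if n = 0 then 0 else T n : ℝ)) := Summable.of_norm_bounded hsum hb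
    have h2 : Summable (fun n : ℤ => (if n = 0 then T 0 else 0 : ℝ)) := (hasSum_ite_eq 0 (T 0)).summable
    refine (h1.add h2).congr fun n => ?_
    by_cases h : n = 0 <;> simp [h]
  have hR := tsum_of_norm_bounded hsum.hasSum hb
  rw [hTs.tsum_eq_add_tsum_ite 0]
  generalize (∑' n : ℤ, (if n = 0 then 0 else T n : ℝ)) = R at *
  rw [Real.norm_eq_abs] at hR
  have e : -(1 / π * (T 0 + R)) + β * Real.tan (π * β / 2) * |u| ^ (β - 1) =
      -(1 / π) * ((T 0 - π * (β * Real.tan (π * β / 2) * |u| ^ (β - 1))) + R) := by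
    field_simp
    ring
  rw [e, abs_mul, abs_neg, abs_of_pos (by positivity)]
  have h3 := (abs_add_le (T 0 - π * (β * Real.tan (π * β / 2) * |u| ^ (β - 1))) R).trans (add_le_add h0 hR)
  have h4 : 1 / π ≤ 1 := by rw [div_le_one (by linarith)]; linarith
  calc _ ≤ 1 * (2 * π ^ (β - 1) / (1 - β) + 1 + ∑' n : ℤ, (∫ x in Ioo (-π) π, |sK β x|) * (1 / (n:ℝ) ^ 2)) := by
        gcongr
    _ = _ := one_mul _
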